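/- arXiv:2010.12676 — 4 statements merged into one kernel-verified Lean document; each statement's English description precedes it below -/
import Mathlib

section
/- Fix positive integers n and m and let 𝒪(n,m) denote the generation-order polytope. For every matrix W ∈ ℝ^{(n+m)×(m+1)} and every temperature τ > 0, define the sequence of matrices L^(t) ∈ ℝ^{(n+m)×(m+1)} by L^(0) = W/τ and, for each t, L^(t+1) obtained from L^(t) by first replacing each column j with j < m by its log-softmax (i.e. subtracting log ∑_{i=0}^{n+m-1} exp(L^(t)_{i,j}) from every entry of column j) while leaving column m unchanged, and then replacing every row i by its log-softmax (subtracting log ∑_{j=0}^{m} exp(L_{i,j}) from every entry of row i). Then the entrywise exponentials exp(L^(t)) converge, as t → ∞, to the unique maximizer over 𝒪(n,m) of the function O ↦ ⟨W, O⟩ − τ ∑_{i,j} O_{i,j} log O_{i,j} (with the convention 0·log 0 = 0). -/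
open Filter Topology Finset

/-- The generation-order polytope `𝒪(n,m)`: matrices in `ℝ^{(n+m)×(m+1)}` with nonnegative
entries, column sums equal to `1` for every column `j < m`, and all row sums equal to `1`. -/
def genPolytope (n m : ℕ) : Set (Matrix (Fin (n + m)) (Fin (m + 1)) ℝ) :=
  {O | (∀ i j, 0 ≤ O i j) ∧
       (∀ j : Fin (m + 1), (j : ℕ) < m → ∑ i, O i j = 1) ∧
       (∀ i, ∑ j, O i j = 1)}

/-- The entropy-regularized linear objective `⟨W, O⟩ − τ ∑_{i,j} O_{i,j} log O_{i,j}`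
(note `Real.log 0 = 0`, so the convention `0 · log 0 = 0` holds). -/
noncomputable def entObj (n m : ℕ) (W : Matrix (Fin (n + m)) (Fin (m + 1)) ℝ) (τ : ℝ)
    (O : Matrix (Fin (n + m)) (Fin (m + 1)) ℝ) : ℝ :=
  (∑ i, ∑ j, W i j * O i j) - τ * ∑ i, ∑ j, O i j * Real.log (O i j)

/-- Column log-softmax step: every column `j` with `j < m` is replaced by its log-softmax;
column `m` is left unchanged. -/
noncomputable def colStep (n m : ℕ) (L : Matrix (Fin (n + m)) (Fin (m + 1)) ℝ) :
    Matrix (Fin (n + m)) (Fin (m + 1)) ℝ :=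
  fun i j => if (j : ℕ) < m then L i j - Real.log (∑ i', Real.exp (L i' j)) else L i j

/-- Row log-softmax step: every row is replaced by its log-softmax. -/
noncomputable def rowStep (n m : ℕ) (L : Matrix (Fin (n + m)) (Fin (m + 1)) ℝ) :
    Matrix (Fin (n + m)) (Fin (m + 1)) ℝ :=
  fun i j => L i j - Real.log (∑ j', Real.exp (L i j'))

/-- The Bregman iterates: `L⁰ = W/τ`, and `L^{t+1}` is obtained from `L^t` by a column
log-softmax (on columns `j < m`) followed by a row log-softmax. -/
noncomputable def bregmanIter (n m : ℕ) (W : Matrix (Fin (n + m)) (Fin (m + 1)) ℝ) (τ : ℝ) :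
    ℕ → Matrix (Fin (n + m)) (Fin (m + 1)) ℝ
  | 0 => fun i j => W i j / τ
  | t + 1 => rowStep n m (colStep n m (bregmanIter n m W τ t))

/-!
Write `D(Q, L)` for the generalized Kullback–Leibler divergence of the nonnegative matrix `Q` from
`exp L`. Normalizing a block of `exp L` with sum `S` lowers `D(Q, L)` by the divergence of `1` from
`S`, for every `Q` whose block has sum `1`; hence a sweep lowers `D(Q, ·)` by the same amount for
all feasible `Q`. This has two consequences.

The decrements tend to `0`, so the column sums of the iterates tend to `1` and some subsequence
converges to a feasible `P`. As `D(P, ·)` decreases along the iterates and tends to `0` along the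
subsequence, it tends to `0`, which forces the whole sequence to converge to `P`.

The difference `D(Q, ·) - D(P, ·)` is constant along the iterates, and by its value at `W / τ` it is
the difference of the objectives at `P` and `Q` divided by `τ`. So this quotient is the limit of
`D(Q, ·) ≥ 0`, which makes `P` a maximizer; and if `Q` is another one, then `D(Q, ·)` tends to `0`
as well, so that `Q` is also the limit of the iterates.
-/

section KLTerm

/-- The generalized Kullback–Leibler divergence `q log (q / p) + p - q` of a number `q ≥ 0` from
the positive number `p = exp l`, written in terms of `l`, so that neither a quotient nor a logarithm
of `p` appears. -/
noncomputable def klTerm (q l : ℝ) : ℝ :=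
  q * Real.log q - q * l + Real.exp l - q

variable {q l : ℝ}

lemma sq_exp_half_sub_sqrt_le_klTerm (hq : 0 ≤ q) :
    (Real.exp (l / 2) - √q) ^ 2 ≤ klTerm q l := by
  have exp_half_sq (x : ℝ) : Real.exp (x / 2) ^ 2 = Real.exp x := by
    rw [Real.exp_half, Real.sq_sqrt (Real.exp_pos x).le]
  rcases hq.eq_or_lt with rfl | hq
  · simp [klTerm, exp_half_sq]
  obtain ⟨s, rfl⟩ : ∃ s, Real.exp s = q := ⟨Real.log q, Real.exp_log hq⟩
  have hprod : Real.exp (l / 2) * Real.exp (s / 2) = Real.exp s * Real.exp ((l - s) / 2) := by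
    rw [← Real.exp_add, ← Real.exp_add]
    ring_nf
  have hexp : Real.exp s * ((l - s) / 2 + 1) ≤ Real.exp s * Real.exp ((l - s) / 2) := by
    gcongr
    exact Real.add_one_le_exp _
  calc (Real.exp (l / 2) - √(Real.exp s)) ^ 2
      = Real.exp l + Real.exp s - 2 * (Real.exp (l / 2) * Real.exp (s / 2)) := by
        rw [← Real.exp_half, sub_sq, exp_half_sq, exp_half_sq]
        ring
    _ ≤ klTerm (Real.exp s) l := by
        rw [klTerm, Real.log_exp, hprod]
        linarith

lemma klTerm_nonneg (hq : 0 ≤ q) : 0 ≤ klTerm q l :=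
  (sq_nonneg _).trans (sq_exp_half_sub_sqrt_le_klTerm hq)

variable {α : Type*} {f : Filter α} {u : α → ℝ}

lemma tendsto_exp_of_tendsto_klTerm (hq : 0 ≤ q)
    (h : Tendsto (fun a => klTerm q (u a)) f (𝓝 0)) :
    Tendsto (fun a => Real.exp (u a)) f (𝓝 q) := by
  have hsq : Tendsto (fun a => (Real.exp (u a / 2) - √q) ^ 2) f (𝓝 0) :=
    squeeze_zero (fun _ => sq_nonneg _) (fun _ => sq_exp_half_sub_sqrt_le_klTerm hq) h
  have habs : Tendsto (fun a => |Real.exp (u a / 2) - √q|) f (𝓝 0) := by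
    simpa [Real.sqrt_sq_eq_abs] using hsq.sqrt
  have hhalf : Tendsto (fun a => Real.exp (u a / 2)) f (𝓝 √q) :=
    tendsto_sub_nhds_zero_iff.1 ((tendsto_zero_iff_abs_tendsto_zero _).2 habs)
  simpa [Real.exp_half, Real.sq_sqrt, hq, (Real.exp_pos _).le] using hhalf.pow 2

lemma tendsto_klTerm_of_tendsto_exp (hq : 0 ≤ q)
    (h : Tendsto (fun a => Real.exp (u a)) f (𝓝 q)) :
    Tendsto (fun a => klTerm q (u a)) f (𝓝 0) := by
  rcases hq.eq_or_lt with rfl | hq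
  · simpa [klTerm] using h
  have hu : Tendsto u f (𝓝 (Real.log q)) := by simpa using h.log hq.ne'
  simpa [klTerm] using (((hu.const_mul q).const_sub (q * Real.log q)).add h).sub_const q

end KLTerm

section LogSumExp

variable {ι : Type*} [Fintype ι]

/-- The logarithm of the normalizing constant of `exp l`; the log-softmax of `l` is
`fun i => l i - logSumExp l`. -/
noncomputable def logSumExp (l : ι → ℝ) : ℝ :=
  Real.log (∑ i, Real.exp (l i))

lemma exp_logSumExp [Nonempty ι] (l : ι → ℝ) :
    Real.exp (logSumExp l) = ∑ i, Real.exp (l i) :=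
  Real.exp_log (sum_pos (fun _ _ => Real.exp_pos _) univ_nonempty)

lemma sum_exp_sub_logSumExp [Nonempty ι] (l : ι → ℝ) :
    ∑ i, Real.exp (l i - logSumExp l) = 1 := by
  simp_rw [Real.exp_sub, ← sum_div, ← exp_logSumExp, div_self (Real.exp_ne_zero _)]

lemma sum_klTerm_sub_logSumExp_add (l : ι → ℝ) {q : ι → ℝ} (hq : ∑ i, q i = 1) :
    ∑ i, klTerm (q i) (l i - logSumExp l) + klTerm 1 (logSumExp l) =
      ∑ i, klTerm (q i) (l i) := by
  have : Nonempty ι := univ_nonempty_iff.1 (nonempty_of_sum_ne_zero (hq ▸ one_ne_zero))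
  have hterm (i : ι) : klTerm (q i) (l i - logSumExp l) =
      klTerm (q i) (l i) + q i * logSumExp l
        + (Real.exp (l i - logSumExp l) - Real.exp (l i)) := by
    simp only [klTerm]
    ring
  simp_rw [hterm, sum_add_distrib, sum_sub_distrib, ← sum_mul, hq, sum_exp_sub_logSumExp,
    ← exp_logSumExp, klTerm, Real.log_one]
  ring

end LogSumExp

section KLDiv

variable {ι κ α : Type*} [Fintype ι] [Fintype κ] {f : Filter α}
  {Q : Matrix ι κ ℝ} {L : α → Matrix ι κ ℝ}

/-- The generalized Kullback–Leibler divergence of the nonnegative matrix `Q` from the entrywise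
exponential of `L`. -/
noncomputable def matrixKL (Q L : Matrix ι κ ℝ) : ℝ :=
  ∑ i, ∑ j, klTerm (Q i j) (L i j)

lemma matrixKL_nonneg (hQ : ∀ i j, 0 ≤ Q i j) (L : Matrix ι κ ℝ) : 0 ≤ matrixKL Q L :=
  sum_nonneg fun i _ => sum_nonneg fun j _ => klTerm_nonneg (hQ i j)

lemma klTerm_le_matrixKL (hQ : ∀ i j, 0 ≤ Q i j) (L : Matrix ι κ ℝ) (i : ι) (j : κ) :
    klTerm (Q i j) (L i j) ≤ matrixKL Q L :=
  calc klTerm (Q i j) (L i j)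
      ≤ ∑ j, klTerm (Q i j) (L i j) :=
        single_le_sum (f := fun j => klTerm (Q i j) (L i j))
          (fun j _ => klTerm_nonneg (hQ i j)) (mem_univ j)
    _ ≤ matrixKL Q L :=
        single_le_sum (f := fun i => ∑ j, klTerm (Q i j) (L i j))
          (fun i _ => sum_nonneg fun j _ => klTerm_nonneg (hQ i j)) (mem_univ i)

lemma tendsto_map_exp_of_tendsto_matrixKL (hQ : ∀ i j, 0 ≤ Q i j)
    (h : Tendsto (fun a => matrixKL Q (L a)) f (𝓝 0)) :
    Tendsto (fun a => (L a).map Real.exp) f (𝓝 Q) :=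
  tendsto_pi_nhds.2 fun i => tendsto_pi_nhds.2 fun j =>
    tendsto_exp_of_tendsto_klTerm (hQ i j) <|
      squeeze_zero (fun _ => klTerm_nonneg (hQ i j)) (fun a => klTerm_le_matrixKL hQ (L a) i j) h

lemma tendsto_matrixKL_of_tendsto_map_exp (hQ : ∀ i j, 0 ≤ Q i j)
    (h : Tendsto (fun a => (L a).map Real.exp) f (𝓝 Q)) :
    Tendsto (fun a => matrixKL Q (L a)) f (𝓝 0) := by
  have hterm (i : ι) (j : κ) : Tendsto (fun a => klTerm (Q i j) (L a i j)) f (𝓝 0) :=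
    tendsto_klTerm_of_tendsto_exp (hQ i j) (tendsto_pi_nhds.1 (tendsto_pi_nhds.1 h i) j)
  simpa [matrixKL] using
    tendsto_finsetSum univ fun i _ => tendsto_finsetSum univ fun j _ => hterm i j

end KLDiv

section GenPolytope

lemma genPolytope_nonempty (n m : ℕ) : (genPolytope n m).Nonempty := by
  refine ⟨fun i j => if j = ⟨min i m, by omega⟩ then 1 else 0, fun i j => ?_, fun j hj => ?_,
    fun i => by simp⟩
  · dsimp only
    split_ifs <;> norm_num
  · have hmin (i : Fin (n + m)) :
        j = ⟨min i m, by omega⟩ ↔ i = ⟨j, by omega⟩ := by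
      simp only [Fin.ext_iff]
      omega
    simp [hmin]

variable {n m : ℕ} {Q : Matrix (Fin (n + m)) (Fin (m + 1)) ℝ}

lemma matrixKL_div (W : Matrix (Fin (n + m)) (Fin (m + 1)) ℝ) {τ : ℝ} (hτ : τ ≠ 0)
    (hQ : ∀ i, ∑ j, Q i j = 1) :
    matrixKL Q (fun i j => W i j / τ) =
      ∑ i, ∑ j, Real.exp (W i j / τ) - (n + m) - entObj n m W τ Q / τ := by
  have hterm (i : Fin (n + m)) (j : Fin (m + 1)) : klTerm (Q i j) (W i j / τ) =
      Q i j * Real.log (Q i j) - W i j * Q i j / τ + Real.exp (W i j / τ) - Q i j := by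
    rw [klTerm]
    ring
  simp_rw [matrixKL, hterm, sum_sub_distrib, sum_add_distrib, sum_sub_distrib, hQ, ← sum_div,
    entObj]
  simp only [sum_const, card_univ, Fintype.card_fin, nsmul_eq_mul, Nat.cast_add, mul_one]
  field_simp
  ring

end GenPolytope

section BregmanSweep

variable {n m : ℕ} {Q : Matrix (Fin (n + m)) (Fin (m + 1)) ℝ}
  (L : Matrix (Fin (n + m)) (Fin (m + 1)) ℝ)

lemma matrixKL_rowStep_add (hQ : ∀ i, ∑ j, Q i j = 1) :
    matrixKL Q (rowStep n m L) + ∑ i, klTerm 1 (logSumExp (L i)) = matrixKL Q L := by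
  simp_rw [matrixKL, ← sum_add_distrib]
  exact sum_congr rfl fun i _ => sum_klTerm_sub_logSumExp_add (L i) (hQ i)

lemma matrixKL_colStep_add (hQ : ∀ j : Fin (m + 1), (j : ℕ) < m → ∑ i, Q i j = 1) :
    matrixKL Q (colStep n m L) +
        ∑ j : Fin m, klTerm 1 (logSumExp fun i => L i j.castSucc) =
      matrixKL Q L := by
  have hcast (i : Fin (n + m)) (j : Fin m) :
      colStep n m L i j.castSucc = L i j.castSucc - logSumExp fun i => L i j.castSucc :=
    if_pos j.isLt
  have hlast (i : Fin (n + m)) : colStep n m L i (Fin.last m) = L i (Fin.last m) :=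
    if_neg (lt_irrefl m)
  have hcol (j : Fin m) :
      ∑ i, klTerm (Q i j.castSucc) (colStep n m L i j.castSucc) +
          klTerm 1 (logSumExp fun i => L i j.castSucc) =
        ∑ i, klTerm (Q i j.castSucc) (L i j.castSucc) := by
    simp_rw [hcast]
    exact sum_klTerm_sub_logSumExp_add (fun i => L i j.castSucc) (hQ j.castSucc j.isLt)
  simp only [matrixKL]
  rw [sum_comm, sum_comm (f := fun i j => klTerm (Q i j) (L i j))]
  simp_rw [Fin.sum_univ_castSucc, ← hcol, hlast, sum_add_distrib]
  ring

/-- The amount by which one sweep, a column step followed by a row step, lowers the divergence of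
any point of the polytope from `exp L`. -/
noncomputable def sweepDecrement : ℝ :=
  ∑ j : Fin m, klTerm 1 (logSumExp fun i => L i j.castSucc) +
    ∑ i, klTerm 1 (logSumExp (colStep n m L i))

lemma matrixKL_sweep_add_sweepDecrement (hQ : Q ∈ genPolytope n m) :
    matrixKL Q (rowStep n m (colStep n m L)) + sweepDecrement L = matrixKL Q L := by
  rw [← matrixKL_colStep_add L hQ.2.1, ← matrixKL_rowStep_add (colStep n m L) hQ.2.2,
    sweepDecrement]
  ring

lemma sweepDecrement_nonneg : 0 ≤ sweepDecrement L :=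
  add_nonneg (sum_nonneg fun _ _ => klTerm_nonneg zero_le_one)
    (sum_nonneg fun _ _ => klTerm_nonneg zero_le_one)

lemma klTerm_logSumExp_col_le_sweepDecrement (j : Fin m) :
    klTerm 1 (logSumExp fun i => L i j.castSucc) ≤ sweepDecrement L :=
  calc klTerm 1 (logSumExp fun i => L i j.castSucc)
      ≤ ∑ j : Fin m, klTerm 1 (logSumExp fun i => L i j.castSucc) :=
        single_le_sum (f := fun j : Fin m => klTerm 1 (logSumExp fun i => L i j.castSucc))
          (fun _ _ => klTerm_nonneg zero_le_one) (mem_univ j)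
    _ ≤ sweepDecrement L :=
        le_add_of_nonneg_right (sum_nonneg fun _ _ => klTerm_nonneg zero_le_one)

end BregmanSweep

section BregmanIter

variable {n m : ℕ} {P Q : Matrix (Fin (n + m)) (Fin (m + 1)) ℝ}
  (W : Matrix (Fin (n + m)) (Fin (m + 1)) ℝ)

lemma matrixKL_bregmanIter_sub_matrixKL_bregmanIter {τ : ℝ} (hτ : τ ≠ 0)
    (hQ : Q ∈ genPolytope n m) (hP : P ∈ genPolytope n m) (t : ℕ) :
    matrixKL Q (bregmanIter n m W τ t) - matrixKL P (bregmanIter n m W τ t) =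
      (entObj n m W τ P - entObj n m W τ Q) / τ := by
  induction t with
  | zero =>
    simp only [bregmanIter, matrixKL_div W hτ hQ.2.2, matrixKL_div W hτ hP.2.2]
    ring
  | succ t ih =>
    rw [← matrixKL_sweep_add_sweepDecrement _ hQ, ← matrixKL_sweep_add_sweepDecrement _ hP] at ih
    simpa [bregmanIter] using ih

variable (τ : ℝ)

lemma antitone_matrixKL_bregmanIter (hQ : Q ∈ genPolytope n m) :
    Antitone fun t => matrixKL Q (bregmanIter n m W τ t) :=
  antitone_nat_of_succ_le fun t => by
    rw [← matrixKL_sweep_add_sweepDecrement (bregmanIter n m W τ t) hQ]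
    exact le_add_of_nonneg_right (sweepDecrement_nonneg _)

lemma tendsto_sweepDecrement_bregmanIter :
    Tendsto (fun t => sweepDecrement (bregmanIter n m W τ t)) atTop (𝓝 0) := by
  obtain ⟨Q, hQ⟩ := genPolytope_nonempty n m
  have hlim := tendsto_atTop_ciInf (antitone_matrixKL_bregmanIter W τ hQ)
    ⟨0, Set.forall_mem_range.2 fun _ => matrixKL_nonneg hQ.1 _⟩
  have hdiff := hlim.sub (hlim.comp (tendsto_add_atTop_nat 1))
  rw [sub_self] at hdiff
  refine hdiff.congr fun t => ?_
  rw [← matrixKL_sweep_add_sweepDecrement (bregmanIter n m W τ t) hQ]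
  exact add_sub_cancel_left _ _

lemma tendsto_col_sum_exp_bregmanIter (j : Fin m) :
    Tendsto (fun t => ∑ i, Real.exp (bregmanIter n m W τ t i j.castSucc)) atTop (𝓝 1) := by
  have : Nonempty (Fin (n + m)) := ⟨⟨j, by omega⟩⟩
  simp_rw [← exp_logSumExp]
  exact tendsto_exp_of_tendsto_klTerm zero_le_one <|
    squeeze_zero (fun _ => klTerm_nonneg zero_le_one)
      (fun _ => klTerm_logSumExp_col_le_sweepDecrement _ j)
      (tendsto_sweepDecrement_bregmanIter W τ)

lemma row_sum_exp_bregmanIter_succ (t : ℕ) (i : Fin (n + m)) :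
    ∑ j, Real.exp (bregmanIter n m W τ (t + 1) i j) = 1 :=
  sum_exp_sub_logSumExp (colStep n m (bregmanIter n m W τ t) i)

lemma mem_genPolytope_of_tendsto_bregmanIter_comp {φ : ℕ → ℕ} (hφ : Tendsto φ atTop atTop)
    (h : Tendsto (fun s => (bregmanIter n m W τ (φ s)).map Real.exp) atTop (𝓝 P)) :
    P ∈ genPolytope n m := by
  have hentry (i j) :
      Tendsto (fun s => Real.exp (bregmanIter n m W τ (φ s) i j)) atTop (𝓝 (P i j)) :=
    tendsto_pi_nhds.1 (tendsto_pi_nhds.1 h i) j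
  have hrow (i) : Tendsto (fun t => ∑ j, Real.exp (bregmanIter n m W τ t i j)) atTop (𝓝 1) :=
    (tendsto_add_atTop_iff_nat 1).1 <| by simp [row_sum_exp_bregmanIter_succ]
  refine ⟨fun i j => ge_of_tendsto' (hentry i j) fun _ => (Real.exp_pos _).le,
    fun j hj => ?_, fun i => ?_⟩
  · exact tendsto_nhds_unique (tendsto_finsetSum _ fun i _ => hentry i j)
      ((tendsto_col_sum_exp_bregmanIter W τ ⟨j, hj⟩).comp hφ)
  · exact tendsto_nhds_unique (tendsto_finsetSum _ fun j _ => hentry i j) ((hrow i).comp hφ)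

lemma exists_tendsto_subseq_exp_bregmanIter :
    ∃ P, ∃ φ : ℕ → ℕ, StrictMono φ ∧
      Tendsto (fun s => (bregmanIter n m W τ (φ s)).map Real.exp) atTop (𝓝 P) := by
  have hbounded (t : ℕ) : (fun i j => Real.exp (bregmanIter n m W τ (t + 1) i j)) ∈
      Set.Icc (0 : Fin (n + m) → Fin (m + 1) → ℝ) 1 := by
    refine ⟨fun i j => (Real.exp_pos _).le, fun i j => ?_⟩
    rw [Pi.one_apply, Pi.one_apply, ← row_sum_exp_bregmanIter_succ W τ t i]
    exact single_le_sum (f := fun j => Real.exp (bregmanIter n m W τ (t + 1) i j))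
      (fun _ _ => (Real.exp_pos _).le) (mem_univ j)
  obtain ⟨P, -, φ, hφ, hlim⟩ := isCompact_Icc.tendsto_subseq hbounded
  exact ⟨P, fun s => φ s + 1, hφ.add_const 1, hlim⟩

lemma exists_tendsto_matrixKL_bregmanIter :
    ∃ P ∈ genPolytope n m, Tendsto (fun t => matrixKL P (bregmanIter n m W τ t)) atTop (𝓝 0) := by
  obtain ⟨P, φ, hφ, hlim⟩ := exists_tendsto_subseq_exp_bregmanIter W τ
  have hP := mem_genPolytope_of_tendsto_bregmanIter_comp W τ hφ.tendsto_atTop hlim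
  exact ⟨P, hP, (tendsto_iff_tendsto_subseq_of_antitone (antitone_matrixKL_bregmanIter W τ hP)
    hφ.tendsto_atTop).2 (tendsto_matrixKL_of_tendsto_map_exp hP.1 hlim)⟩

end BregmanIter

/-- Bregman's method converges: the entrywise exponentials `exp(L^t)` tend, as `t → ∞`, to the
unique maximizer of `O ↦ ⟨W, O⟩ − τ ∑ O_{ij} log O_{ij}` over the generation-order polytope. -/
theorem bregman_iter_tendsto_unique_entropic_maximizer
    (n m : ℕ) (hn : 0 < n) (hm : 0 < m)
    (W : Matrix (Fin (n + m)) (Fin (m + 1)) ℝ) (τ : ℝ) (hτ : 0 < τ) :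
    ∃ Ostar ∈ genPolytope n m,
      (∀ O ∈ genPolytope n m, entObj n m W τ O ≤ entObj n m W τ Ostar) ∧
      (∀ O ∈ genPolytope n m,
        (∀ O' ∈ genPolytope n m, entObj n m W τ O' ≤ entObj n m W τ O) → O = Ostar) ∧
      Tendsto
        (fun t => (fun i j => Real.exp (bregmanIter n m W τ t i j) :
          Matrix (Fin (n + m)) (Fin (m + 1)) ℝ))
        atTop (𝓝 Ostar) := by
  obtain ⟨P, hP, hKL⟩ := exists_tendsto_matrixKL_bregmanIter W τ
  have hsub {O} (hO : O ∈ genPolytope n m) (t : ℕ) :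
      matrixKL O (bregmanIter n m W τ t) =
        matrixKL P (bregmanIter n m W τ t) + (entObj n m W τ P - entObj n m W τ O) / τ :=
    eq_add_of_sub_eq' (matrixKL_bregmanIter_sub_matrixKL_bregmanIter W hτ.ne' hO hP t)
  have hmax : ∀ O ∈ genPolytope n m, entObj n m W τ O ≤ entObj n m W τ P := by
    intro O hO
    have hgap : 0 ≤ 0 + (entObj n m W τ P - entObj n m W τ O) / τ :=
      ge_of_tendsto' (hKL.add_const _) fun t => hsub hO t ▸ matrixKL_nonneg hO.1 _
    rwa [zero_add, le_div_iff₀ hτ, zero_mul, sub_nonneg] at hgap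
  have hlim := tendsto_map_exp_of_tendsto_matrixKL hP.1 hKL
  refine ⟨P, hP, hmax, fun O hO hOmax => ?_, hlim⟩
  have hobj : entObj n m W τ P = entObj n m W τ O := (hOmax P hP).antisymm (hmax O hO)
  have hKL' : Tendsto (fun t => matrixKL O (bregmanIter n m W τ t)) atTop (𝓝 0) :=
    hKL.congr fun t => by simp [hsub hO t, hobj]
  exact tendsto_nhds_unique (tendsto_map_exp_of_tendsto_matrixKL hO.1 hKL') hlim
end

section
/- Fix positive integers n and m and let 𝒪(n,m) denote the generation-order polytope. For every cost matrix c ∈ ℝ^{(n+m)×(m+1)}, the maximum of O ↦ ⟨c, O⟩ over 𝒪(n,m) is attained at some matrix all of whose entries lie in {0, 1}; that is, there exists O* ∈ 𝒪(n,m) with O*_{i,j} ∈ {0,1} for all i,j such that ⟨c, O*⟩ ≥ ⟨c, O⟩ for every O ∈ 𝒪(n,m). -/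
/-!
The row-sum equations force the last column to sum to `n`, so `𝒪(n,m)` is a semi-assignment
polytope: every row sums to `1` and the column sums are prescribed natural numbers `b j`. Splitting
each column `j` evenly into `b j` copies turns a point of such a polytope into a doubly stochastic
matrix, and merging the copies recovers the point. Merging is linear and sends a permutation matrix
to the `0`/`1` matrix of a function, so Birkhoff's theorem exhibits the polytope as the convex hull
of such matrices, and a convex function on the hull of a finite set is maximal at one of its points.
-/

open Finset

section AssignmentMatrix

variable {ι κ : Type*} [DecidableEq κ]

/-- The `0`/`1` matrix of a function `f`: row `i` has its single `1` in column `f i`. -/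
def assignmentMatrix (R : Type*) [Zero R] [One R] (f : ι → κ) : Matrix ι κ R :=
  (1 : Matrix κ κ R).submatrix f id

lemma assignmentMatrix_apply {R : Type*} [Zero R] [One R] (f : ι → κ) (i : ι) (j : κ) :
    assignmentMatrix R f i j = if f i = j then 1 else 0 :=
  Matrix.one_apply

lemma permMatrix_mul_assignmentMatrix {R : Type*} [NonAssocSemiring R] [Fintype ι] [DecidableEq ι]
    (σ : Equiv.Perm ι) (f : ι → κ) :
    σ.permMatrix R * assignmentMatrix R f = assignmentMatrix R (f ∘ σ) :=
  PEquiv.toMatrix_toPEquiv_mul σ _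

lemma exists_forall_card_fiber_eq [Fintype ι] [Fintype κ] {b : κ → ℕ}
    (hb : ∑ j, b j = Fintype.card ι) : ∃ f : ι → κ, ∀ j, #{i | f i = j} = b j := by
  let e : ι ≃ Σ j, Fin (b j) := Fintype.equivOfCardEq (by simp [hb])
  refine ⟨fun i ↦ (e i).1, fun j ↦ ?_⟩
  calc #{i | (e i).1 = j} = Fintype.card {i // (e i).1 = j} := (Fintype.card_subtype _).symm
    _ = Fintype.card {x : Σ j, Fin (b j) // x.1 = j} :=
      Fintype.card_congr (e.subtypeEquiv fun _ ↦ Iff.rfl)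
    _ = b j := by rw [Fintype.card_congr (Equiv.sigmaSubtype j), Fintype.card_fin]

end AssignmentMatrix

section SemiAssignmentPolytope

variable {ι κ R : Type*} [Fintype ι] [Fintype κ] {b : κ → ℕ} {f : ι → κ} {M : Matrix ι κ R}

/-- The semi-assignment polytope with demands `b`: the feasible region of the transportation problem
in which every row has supply `1` and column `j` has demand `b j`. -/
def semiAssignmentPolytope (ι R : Type*) [Fintype ι] [Semiring R] [LE R] (b : κ → ℕ) :
    Set (Matrix ι κ R) :=
  {M | (∀ i j, 0 ≤ M i j) ∧ (∀ j, ∑ i, M i j = b j) ∧ ∀ i, ∑ j, M i j = 1}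

section Semiring

variable [Semiring R]

lemma sum_demand_eq_card [LE R] [CharZero R] (hM : M ∈ semiAssignmentPolytope ι R b) :
    ∑ j, b j = Fintype.card ι := by
  obtain ⟨-, hcol, hrow⟩ := hM
  have total : ∑ j, (b j : R) = Fintype.card ι := by
    calc ∑ j, (b j : R) = ∑ i, ∑ j, M i j := by simp_rw [← hcol]; exact sum_comm
      _ = Fintype.card ι := by simp [hrow]
  exact_mod_cast total

variable [PartialOrder R] [IsOrderedRing R]

lemma convex_semiAssignmentPolytope : Convex R (semiAssignmentPolytope ι R b) := by
  rintro M ⟨hM, hMcol, hMrow⟩ N ⟨hN, hNcol, hNrow⟩ s t hs ht hst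
  refine ⟨fun i j ↦ add_nonneg (mul_nonneg hs (hM i j)) (mul_nonneg ht (hN i j)),
    fun j ↦ ?_, fun i ↦ ?_⟩
  · simp [sum_add_distrib, ← mul_sum, hMcol, hNcol, ← add_mul, hst]
  · simp [sum_add_distrib, ← mul_sum, hMrow, hNrow, hst]

lemma assignmentMatrix_mem_semiAssignmentPolytope [DecidableEq κ]
    (hf : ∀ j, #{i | f i = j} = b j) : assignmentMatrix R f ∈ semiAssignmentPolytope ι R b := by
  refine ⟨fun i j ↦ ?_, fun j ↦ ?_, fun i ↦ ?_⟩ <;> simp only [assignmentMatrix_apply]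
  · split_ifs
    exacts [zero_le_one, le_rfl]
  · rw [sum_boole, hf]
  · rw [sum_ite_eq, if_pos (mem_univ _)]

end Semiring

variable [Field R] [LinearOrder R] [IsStrictOrderedRing R]

-- A column of zero demand vanishes, so the junk value `M i j / 0 = 0` is the right one.
lemma demand_mul_div_demand (hM : M ∈ semiAssignmentPolytope ι R b) (i : ι) (j : κ) :
    (b j : R) * (M i j / b j) = M i j := by
  refine mul_div_cancel_of_imp' fun hj ↦ ?_
  have hcol : ∑ i, M i j = 0 := (hM.2.1 j).trans hj
  exact (sum_eq_zero_iff_of_nonneg fun i _ ↦ hM.1 i j).1 hcol i (mem_univ i)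

/-- The square matrix obtained by replacing each column `j` of `M` by copies of itself divided by
`b j`, one for each element of the fibre of `f` at `j`. It is doubly stochastic when `M` lies in the
semi-assignment polytope and these fibres have cardinalities `b j`. -/
def splitColumns {ι κ R : Type*} [DivisionSemiring R] (b : κ → ℕ) (f : ι → κ) (M : Matrix ι κ R) :
    Matrix ι ι R :=
  Matrix.of fun i k ↦ M i (f k) / b (f k)

variable [DecidableEq κ]

lemma splitColumns_mul_assignmentMatrix (hf : ∀ j, #{i | f i = j} = b j)
    (hM : M ∈ semiAssignmentPolytope ι R b) :
    splitColumns b f M * assignmentMatrix R f = M := by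
  ext i j
  calc (splitColumns b f M * assignmentMatrix R f) i j
      = ∑ k with f k = j, M i (f k) / b (f k) := by
        simp [Matrix.mul_apply, splitColumns, assignmentMatrix_apply, sum_filter]
    _ = ∑ k with f k = j, M i j / b j :=
        sum_congr rfl fun k hk ↦ by rw [(mem_filter.1 hk).2]
    _ = b j * (M i j / b j) := by rw [sum_const, hf, nsmul_eq_mul]
    _ = M i j := demand_mul_div_demand hM i j

lemma splitColumns_mem_doublyStochastic [DecidableEq ι] (hf : ∀ j, #{i | f i = j} = b j)
    (hM : M ∈ semiAssignmentPolytope ι R b) :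
    splitColumns b f M ∈ doublyStochastic R ι := by
  refine mem_doublyStochastic_iff_sum.2
    ⟨fun i k ↦ div_nonneg (hM.1 i _) (Nat.cast_nonneg _), fun i ↦ ?_, fun k ↦ ?_⟩
  · calc ∑ k, M i (f k) / b (f k)
        = ∑ j, ∑ k with f k = j, M i j / b j := (sum_fiberwise' univ f fun j ↦ M i j / b j).symm
      _ = ∑ j, M i j := sum_congr rfl fun j _ ↦ by
        rw [sum_const, hf, nsmul_eq_mul, demand_mul_div_demand hM]
      _ = 1 := hM.2.2 i
  · have hk : b (f k) ≠ 0 := by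
      rw [← hf]
      exact card_ne_zero_of_mem (mem_filter.2 ⟨mem_univ k, rfl⟩)
    calc ∑ i, M i (f k) / b (f k) = b (f k) / b (f k) := by rw [← sum_div, hM.2.1]
      _ = 1 := div_self (Nat.cast_ne_zero.2 hk)

theorem semiAssignmentPolytope_eq_convexHull :
    semiAssignmentPolytope ι R b =
      convexHull R (assignmentMatrix R '' {f : ι → κ | ∀ j, #{i | f i = j} = b j}) := by
  classical
  refine Set.Subset.antisymm (fun M hM ↦ ?_) (convexHull_min ?_ convex_semiAssignmentPolytope)
  · obtain ⟨f, hf⟩ := exists_forall_card_fiber_eq (sum_demand_eq_card hM)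
    let merge : Matrix ι ι R →ₗ[R] Matrix ι κ R := mulRightLinearMap ι R (assignmentMatrix R f)
    have hmem : M ∈ merge '' convexHull R {σ.permMatrix R | σ : Equiv.Perm ι} := by
      rw [← doublyStochastic_eq_convexHull_permMatrix]
      exact ⟨_, splitColumns_mem_doublyStochastic hf hM, splitColumns_mul_assignmentMatrix hf hM⟩
    rw [merge.image_convexHull] at hmem
    refine convexHull_mono ?_ hmem
    rintro _ ⟨_, ⟨σ, rfl⟩, rfl⟩
    refine ⟨f ∘ σ, fun j ↦ ?_, (permMatrix_mul_assignmentMatrix σ f).symm⟩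
    rw [← hf j]
    exact card_equiv σ (by simp)
  · rintro _ ⟨f, hf, rfl⟩
    exact assignmentMatrix_mem_semiAssignmentPolytope hf

theorem exists_isMaxOn_assignmentMatrix_of_convexOn (hb : ∑ j, b j = Fintype.card ι)
    {g : Matrix ι κ R → R} (hg : ConvexOn R (semiAssignmentPolytope ι R b) g) :
    ∃ f : ι → κ, (∀ j, #{i | f i = j} = b j) ∧
      IsMaxOn g (semiAssignmentPolytope ι R b) (assignmentMatrix R f) := by
  classical
  obtain ⟨f, hf, hmax⟩ := Set.exists_max_image {f : ι → κ | ∀ j, #{i | f i = j} = b j}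
    (fun f ↦ g (assignmentMatrix R f)) (Set.toFinite _) (exists_forall_card_fiber_eq hb)
  refine ⟨f, hf, fun M hM ↦ ?_⟩
  rw [semiAssignmentPolytope_eq_convexHull] at hg hM
  obtain ⟨_, ⟨f', hf', rfl⟩, hle⟩ := hg.exists_ge_of_mem_convexHull (subset_convexHull R _) hM
  exact hle.trans (hmax f' hf')

end SemiAssignmentPolytope

section GenerationOrder

variable (n m : ℕ)

/-- The column sums of the matrices in `𝒪(n,m)`: `1` for each of the first `m` columns, and the
implied value `n` for the last one. -/
def generationDemand : Fin (m + 1) → ℕ :=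
  Fin.snoc (fun _ ↦ 1) n

@[simp]
lemma generationDemand_castSucc (j : Fin m) : generationDemand n m j.castSucc = 1 := by
  simp [generationDemand]

@[simp]
lemma generationDemand_last : generationDemand n m (Fin.last m) = n := by
  simp [generationDemand]

lemma sum_generationDemand : ∑ j, generationDemand n m j = Fintype.card (Fin (n + m)) := by
  simp [Fin.sum_univ_castSucc, add_comm]

variable {n m}

lemma sum_last_column_of_mem_genPolytope {O : Matrix (Fin (n + m)) (Fin (m + 1)) ℝ}
    (hO : O ∈ genPolytope n m) : ∑ i, O i (Fin.last m) = n := by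
  obtain ⟨-, hcol, hrow⟩ := hO
  have total : (m : ℝ) + ∑ i, O i (Fin.last m) = n + m :=
    calc (m : ℝ) + ∑ i, O i (Fin.last m) = ∑ j, ∑ i, O i j := by
          simp [Fin.sum_univ_castSucc, hcol]
      _ = ∑ i, ∑ j, O i j := sum_comm
      _ = n + m := by simp [hrow]
  linarith

lemma genPolytope_eq_semiAssignmentPolytope :
    genPolytope n m = semiAssignmentPolytope (Fin (n + m)) ℝ (generationDemand n m) := by
  ext O
  constructor
  · intro hO
    refine ⟨hO.1, Fin.lastCases ?_ fun j ↦ ?_, hO.2.2⟩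
    · rw [sum_last_column_of_mem_genPolytope hO, generationDemand_last]
    · rw [hO.2.1 _ j.is_lt, generationDemand_castSucc, Nat.cast_one]
  · rintro ⟨hnonneg, hcol, hrow⟩
    refine ⟨hnonneg, Fin.lastCases (fun hlt ↦ (lt_irrefl m hlt).elim) fun j _ ↦ ?_, hrow⟩
    rw [hcol, generationDemand_castSucc, Nat.cast_one]

end GenerationOrder

/-- For every cost matrix `c`, the maximum of `O ↦ ⟨c, O⟩` over the generation-order polytope
is attained at some matrix all of whose entries lie in `{0, 1}`. -/
theorem genPolytope_linear_max_attained_at_integral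
    (n m : ℕ) (hn : 0 < n) (hm : 0 < m) (c : Matrix (Fin (n + m)) (Fin (m + 1)) ℝ) :
    ∃ Ostar ∈ genPolytope n m,
      (∀ i j, Ostar i j = 0 ∨ Ostar i j = 1) ∧
      ∀ O ∈ genPolytope n m, (∑ i, ∑ j, c i j * O i j) ≤ ∑ i, ∑ j, c i j * Ostar i j := by
  let cost : Matrix (Fin (n + m)) (Fin (m + 1)) ℝ →ₗ[ℝ] ℝ :=
    ∑ i, ∑ j, c i j • Matrix.entryLinearMap ℝ ℝ i j
  have cost_apply (O) : cost O = ∑ i, ∑ j, c i j * O i j := by simp [cost]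
  obtain ⟨f, hf, hmax⟩ := exists_isMaxOn_assignmentMatrix_of_convexOn (sum_generationDemand n m)
    (cost.convexOn convex_semiAssignmentPolytope)
  rw [genPolytope_eq_semiAssignmentPolytope]
  refine ⟨assignmentMatrix ℝ f, assignmentMatrix_mem_semiAssignmentPolytope hf,
    fun i j ↦ ?_, fun O hO ↦ ?_⟩
  · rw [assignmentMatrix_apply]
    exact (ite_eq_or_eq _ _ _).symm
  · simp only [← cost_apply]
    exact hmax hO
end

section
/- Let m and T be positive integers, let α be a type, and let e : Fin m → Fin m → Prop be an edge relation admitting a rank function ρ : Fin m → ℕ such that e j i implies ρ j < ρ i and ρ i < T for all i (i.e. the dependency graph is a DAG of depth at most T). Let g : (Fin m → α) → (Fin m → α) be an update map that is local with respect to e, meaning: for every i and all h, h' : Fin m → α, if h j = h' j for every j with e j i, then (g h) i = (g h') i. Then for every initial assignment h₀ : Fin m → α, the T-fold iterate g^[T] h₀ is a fixed point of g, and moreover g^[t] h₀ = g^[T] h₀ for every t ≥ T. -/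
/-!
After `n` steps every coordinate of rank less than `n` has forgotten the initial assignment, since
it is computed from coordinates of smaller rank. Hence `g^[T]` is constant, so
`g^[T + k] h₀ = g^[T] (g^[k] h₀)` does not depend on `k`.
-/

theorem iterate_eq_iterate_of_forall_eq_of_le {X : Type*} {f : X → X} {n t : ℕ}
    (hf : ∀ x y, f^[n] x = f^[n] y) (hnt : n ≤ t) (x : X) : f^[t] x = f^[n] x := by
  obtain ⟨k, rfl⟩ := Nat.exists_eq_add_of_le hnt
  rw [Function.iterate_add_apply]
  exact hf _ _

section LocalUpdate

variable {ι : Type*} {α : ι → Type*} {e : ι → ι → Prop} {ρ : ι → ℕ} {g : (∀ i, α i) → ∀ i, α i}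

theorem iterate_apply_eq_iterate_apply_of_rank_lt (hrank : ∀ j i, e j i → ρ j < ρ i)
    (hlocal : ∀ i, DependsOn (fun h ↦ g h i) {j | e j i}) {n : ℕ} {i : ι} (hi : ρ i < n)
    (h h' : ∀ i, α i) : g^[n] h i = g^[n] h' i := by
  induction n generalizing i with
  | zero => exact absurd hi (Nat.not_lt_zero _)
  | succ n ih =>
    have predecessors_agree : ∀ j, e j i → g^[n] h j = g^[n] h' j := fun j hji ↦
      ih ((hrank j i hji).trans_le (Nat.le_of_lt_succ hi))
    rw [Function.iterate_succ_apply', Function.iterate_succ_apply']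
    exact hlocal i predecessors_agree

theorem dag_local_update_converges_general {T : ℕ} (hrank : ∀ j i, e j i → ρ j < ρ i)
    (hdepth : ∀ i, ρ i < T) (hlocal : ∀ i, DependsOn (fun h ↦ g h i) {j | e j i})
    (h₀ : ∀ i, α i) :
    Function.IsFixedPt g (g^[T] h₀) ∧ ∀ t, T ≤ t → g^[t] h₀ = g^[T] h₀ := by
  have iterate_const : ∀ h h', g^[T] h = g^[T] h' := fun h h' ↦ funext fun i ↦
    iterate_apply_eq_iterate_apply_of_rank_lt hrank hlocal (hdepth i) h h'
  have stationary : ∀ t, T ≤ t → g^[t] h₀ = g^[T] h₀ := fun _ ht ↦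
    iterate_eq_iterate_of_forall_eq_of_le iterate_const ht h₀
  exact ⟨(Function.iterate_succ_apply' g T h₀).symm.trans (stationary (T + 1) T.le_succ),
    stationary⟩

end LocalUpdate

/-- Iterating a local update map over a DAG of depth at most `T` reaches a fixed point after
`T` steps: if the dependency relation `e` admits a rank function `ρ` with `e j i → ρ j < ρ i`
and `ρ i < T`, and `g` is local with respect to `e` (the `i`-th output depends only on inputs
`j` with `e j i`), then `g^[T] h₀` is a fixed point of `g` and `g^[t] h₀ = g^[T] h₀` for all
`t ≥ T`. -/
theorem dag_local_update_converges
    (m T : ℕ) (hm : 0 < m) (hT : 0 < T) (α : Type*)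
    (e : Fin m → Fin m → Prop) (ρ : Fin m → ℕ)
    (hrank : ∀ j i, e j i → ρ j < ρ i) (hdepth : ∀ i, ρ i < T)
    (g : (Fin m → α) → (Fin m → α))
    (hlocal : ∀ (i : Fin m) (h h' : Fin m → α),
      (∀ j, e j i → h j = h' j) → g h i = g h' i)
    (h₀ : Fin m → α) :
    g (g^[T] h₀) = g^[T] h₀ ∧ ∀ t, T ≤ t → g^[t] h₀ = g^[T] h₀ :=
  dag_local_update_converges_general hrank hdepth (fun i _ _ ↦ hlocal i _ _) h₀
end

section
/- For every μ ∈ ℝ, let f_μ : ℝ → ℝ be the Gumbel density with location μ and scale 1, f_μ(x) = exp(−(x − μ) − exp(−(x − μ))). Then the Kullback–Leibler divergence of the Gumbel(μ,1) distribution from the Gumbel(0,1) distribution has the closed form ∫_ℝ f_μ(x) · log(f_μ(x) / f_0(x)) dx = exp(−μ) + μ − 1. -/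
open MeasureTheory

/-!
If `X` has the Gumbel law with location `μ`, then `U = exp (-(X - μ))` has the standard exponential
law. The log-likelihood ratio of the locations `μ` and `ν` is an affine function of `U`, so its
expectation follows from `𝔼[U] = 1`.
-/

section Gumbel

open Real Set

/-- The Lebesgue density of the Gumbel distribution with location `μ` and unit scale. -/
noncomputable def gumbelPDFReal (μ x : ℝ) : ℝ :=
  exp (-(x - μ) - exp (-(x - μ)))

theorem gumbelPDFReal_eq_exp_mul_exp (μ x : ℝ) :
    gumbelPDFReal μ x = exp (-(x - μ)) * exp (-exp (-(x - μ))) := by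
  rw [gumbelPDFReal, sub_eq_add_neg _ (exp _), exp_add]

theorem log_gumbelPDFReal_div_gumbelPDFReal (μ ν x : ℝ) :
    log (gumbelPDFReal μ x / gumbelPDFReal ν x) =
      (μ - ν) + (exp (ν - μ) - 1) * exp (-(x - μ)) := by
  have exp_shift : exp (-(x - ν)) = exp (ν - μ) * exp (-(x - μ)) := by
    rw [← exp_add]
    ring_nf
  rw [gumbelPDFReal, gumbelPDFReal, ← exp_sub, log_exp, exp_shift]
  ring

theorem integral_gumbelPDFReal_smul_comp_exp {E : Type*} [NormedAddCommGroup E] [NormedSpace ℝ E]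
    (μ : ℝ) (g : ℝ → E) :
    ∫ x, gumbelPDFReal μ x • g (exp (-(x - μ))) = ∫ u in Ioi 0, exp (-u) • g u := by
  have hasDerivAt_subst (x : ℝ) : HasDerivAt (fun x ↦ exp (-(x - μ))) (-exp (-(x - μ))) x := by
    simpa only [mul_neg_one] using ((hasDerivAt_id' x).sub_const μ).fun_neg.exp
  have injective_subst : Function.Injective fun x ↦ exp (-(x - μ)) :=
    exp_injective.comp (neg_injective.comp sub_left_injective)
  have range_subst : range (fun x ↦ exp (-(x - μ))) = Ioi 0 := by
    have surjective_neg_sub : Function.Surjective fun x : ℝ ↦ -(x - μ) :=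
      neg_surjective.comp (Equiv.subRight μ).surjective
    rw [← range_exp, ← surjective_neg_sub.range_comp exp, Function.comp_def]
  have change_of_variables := integral_image_eq_integral_abs_deriv_smul MeasurableSet.univ
    (fun x _ ↦ (hasDerivAt_subst x).hasDerivWithinAt) injective_subst.injOn
    (fun u ↦ exp (-u) • g u)
  rw [image_univ, range_subst, setIntegral_univ] at change_of_variables
  simp only [change_of_variables, abs_neg, abs_exp, smul_smul, gumbelPDFReal_eq_exp_mul_exp]

theorem integral_exp_neg_mul_affine_Ioi_zero (a b : ℝ) :
    ∫ u in Ioi (0 : ℝ), exp (-u) * (a + b * u) = a + b := by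
  have integrable_exp_neg_mul : IntegrableOn (fun u ↦ exp (-u) * u) (Ioi 0) := by
    simpa only [add_sub_cancel_right, rpow_one] using
      GammaIntegral_convergent (s := 1 + 1) (by norm_num)
  have integral_exp_neg_mul : ∫ u in Ioi (0 : ℝ), exp (-u) * u = 1 := by
    simpa only [add_sub_cancel_right, rpow_one, Gamma_add_one one_ne_zero, Gamma_one, mul_one]
      using (Gamma_eq_integral (s := 1 + 1) (by norm_num)).symm
  calc ∫ u in Ioi (0 : ℝ), exp (-u) * (a + b * u)
      = ∫ u in Ioi (0 : ℝ), (a * exp (-u) + b * (exp (-u) * u)) := by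
        congr with u
        ring
    _ = a * (∫ u in Ioi (0 : ℝ), exp (-u)) + b * ∫ u in Ioi (0 : ℝ), exp (-u) * u := by
        rw [integral_add ((integrableOn_exp_neg_Ioi 0).const_mul a)
          (integrable_exp_neg_mul.const_mul b), integral_const_mul, integral_const_mul]
    _ = a + b := by rw [integral_exp_neg_Ioi_zero, integral_exp_neg_mul, mul_one, mul_one]

theorem gumbel_kl_closed_form_general (μ ν : ℝ) :
    ∫ x, gumbelPDFReal μ x * log (gumbelPDFReal μ x / gumbelPDFReal ν x) =
      exp (ν - μ) + (μ - ν) - 1 := by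
  calc ∫ x, gumbelPDFReal μ x * log (gumbelPDFReal μ x / gumbelPDFReal ν x)
      = ∫ x, gumbelPDFReal μ x * ((μ - ν) + (exp (ν - μ) - 1) * exp (-(x - μ))) := by
        simp only [log_gumbelPDFReal_div_gumbelPDFReal]
    _ = ∫ u in Ioi 0, exp (-u) * ((μ - ν) + (exp (ν - μ) - 1) * u) :=
        integral_gumbelPDFReal_smul_comp_exp μ fun u ↦ (μ - ν) + (exp (ν - μ) - 1) * u
    _ = (μ - ν) + (exp (ν - μ) - 1) := integral_exp_neg_mul_affine_Ioi_zero _ _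
    _ = exp (ν - μ) + (μ - ν) - 1 := by ring

end Gumbel

/-- The KL divergence of `Gumbel(μ, 1)` from `Gumbel(0, 1)` has the closed form
`exp(−μ) + μ − 1`, where `Gumbel(μ, 1)` has Lebesgue density
`f_μ(x) = exp(−(x − μ) − exp(−(x − μ)))`. -/
theorem gumbel_kl_closed_form (μ : ℝ) :
    (∫ x : ℝ, Real.exp (-(x - μ) - Real.exp (-(x - μ))) *
        Real.log (Real.exp (-(x - μ) - Real.exp (-(x - μ))) /
          Real.exp (-(x - 0) - Real.exp (-(x - 0))))) =
      Real.exp (-μ) + μ - 1 := by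
  simpa only [gumbelPDFReal, zero_sub, sub_zero] using gumbel_kl_closed_form_general μ 0
end
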